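/- Suppose A : [0,∞) → M_n(ℂ) is differentiable and satisfies A'(t) = A(t)·[A(t), A(t)*] for all t ≥ 0. If t_k → ∞ is a sequence of times such that A(t_k) converges to some A_∞ ∈ M_n(ℂ), then A_∞ is normal. Moreover, if s_k → ∞ is another sequence with A(s_k) → A'_∞, then there exists a unitary matrix U ∈ M_n(ℂ) with A'_∞ = U A_∞ U*; i.e. all subsequential limits of the flow lie in a single unitary conjugation orbit of normal matrices. -/

import Mathlib

/-!
STATEMENT 9: If A : [0,∞) → M_n(ℂ) solves A' = A[A,A*] and A(t_k) → A∞ along some t_k → ∞,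
then A∞ is normal; and any two subsequential limits are unitarily conjugate.
-/

open Matrix Set Filter

attribute [local instance] Matrix.frobeniusSeminormedAddCommGroup
  Matrix.frobeniusNormedAddCommGroup Matrix.frobeniusNormedSpace

theorem exists_unitary_diagonalization_of_commute_conjTranspose {n : ℕ}
    {M : Matrix (Fin n) (Fin n) ℂ} (hM : M * Mᴴ = Mᴴ * M) :
    ∃ (V : Matrix (Fin n) (Fin n) ℂ) (d : Fin n → ℂ),
      V * Vᴴ = 1 ∧ M = V * diagonal d * Vᴴ := by
  classical
  set T₁ := toEuclideanLin (M + Mᴴ) with hT₁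
  set T₂ := toEuclideanLin (Complex.I • (M - Mᴴ)) with hT₂
  have h₁ : T₁.IsSymmetric := by
    rw [hT₁, isSymmetric_toEuclideanLin_iff, IsHermitian]
    simp [add_comm]
  have h₂ : T₂.IsSymmetric := by
    rw [hT₂, isSymmetric_toEuclideanLin_iff, IsHermitian]
    simp [← smul_neg]
  have hcomm : Commute T₁ T₂ := by
    have hc : (M + Mᴴ) * (Complex.I • (M - Mᴴ)) = (Complex.I • (M - Mᴴ)) * (M + Mᴴ) := by
      rw [mul_smul_comm, smul_mul_assoc]
      congr 1
      simp only [add_mul, mul_add, sub_mul, mul_sub, hM]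
      abel
    refine LinearMap.ext fun x => ?_
    have := congrArg (fun N => toEuclideanLin N x) hc
    simpa [hT₁, hT₂, toLpLin_apply, Module.End.mul_apply] using this
  have hint := LinearMap.IsSymmetric.directSum_isInternal_of_commute h₁ h₂ hcomm
  have hfam := LinearMap.IsSymmetric.orthogonalFamily_eigenspace_inf_eigenspace h₁ h₂
  rw [← DirectSum.isInternal_ne_bot_iff] at hint
  have hfin := WellFoundedGT.finite_ne_bot_of_iSupIndep hfam.independent
  have : Fintype {i : ℂ × ℂ // Module.End.eigenspace T₁ i.2 ⊓ Module.End.eigenspace T₂ i.1 ≠ ⊥} :=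
    hfin.fintype
  have hfam' := hfam.comp (γ := {i : ℂ × ℂ //
    Module.End.eigenspace T₁ i.2 ⊓ Module.End.eigenspace T₂ i.1 ≠ ⊥}) Subtype.coe_injective
  have hn : Module.finrank ℂ (EuclideanSpace ℂ (Fin n)) = n := by simp
  let b := hint.subordinateOrthonormalBasis hn hfam'
  have hb : ∀ i, ∃ c : ℂ, M *ᵥ (b i).ofLp = c • (b i).ofLp := by
    intro i
    have hmem := hint.subordinateOrthonormalBasis_subordinate hn i hfam'
    obtain ⟨hx, hy⟩ := Submodule.mem_inf.mp hmem
    rw [Module.End.mem_eigenspace_iff] at hx hy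
    have hx' := congrArg WithLp.ofLp hx
    have hy' := congrArg WithLp.ofLp hy
    simp only [hT₁, hT₂, toLpLin_apply, WithLp.ofLp_smul, add_mulVec, sub_mulVec,
      smul_mulVec] at hx' hy'
    generalize (hint.subordinateOrthonormalBasisIndex hn i hfam').1 = z at hx' hy'
    refine ⟨(1 / 2 : ℂ) * (z.2 - Complex.I * z.1), ?_⟩
    rw [mul_smul, sub_smul, mul_smul, ← hx', ← hy', smul_smul, Complex.I_mul_I]
    module
  choose d hd using hb
  let V := (EuclideanSpace.basisFun (Fin n) ℂ).toBasis.toMatrix b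
  have hV : V ∈ unitaryGroup (Fin n) ℂ :=
    OrthonormalBasis.toMatrix_orthonormalBasis_mem_unitary _ _
  have hVV : V * Vᴴ = 1 := mem_unitaryGroup_iff.mp hV
  have hMV : M * V = V * diagonal d := by
    ext i j
    have := congrFun (hd j) i
    rw [mul_diagonal]
    simpa [V, Matrix.mul_apply, Module.Basis.toMatrix_apply, mulVec, dotProduct, mul_comm] using this
  exact ⟨V, d, hVV, by rw [← hMV, Matrix.mul_assoc, hVV, Matrix.mul_one]⟩

theorem exists_perm_comp_eq_of_sum_pow_eq {ι : Type*} [Fintype ι]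
    {d e : ι → ℂ} (h : ∀ k : ℕ, ∑ i, d i ^ k = ∑ i, e i ^ k) :
    ∃ σ : Equiv.Perm ι, d ∘ σ = e := by
  classical
  have hp (p : Polynomial ℂ) : ∑ i, p.eval (d i) = ∑ i, p.eval (e i) := by
    simp only [Polynomial.eval_eq_sum_range]
    rw [Finset.sum_comm, Finset.sum_comm (s := Finset.univ (α := ι))]
    simp only [← Finset.mul_sum, h]
  have hcard (z : ℂ) : Fintype.card {i // d i = z} = Fintype.card {i // e i = z} := by
    let s : Finset ℂ := insert z (Finset.univ.image d ∪ Finset.univ.image e)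
    let p := Lagrange.basis s id z
    have hz : z ∈ s := Finset.mem_insert_self _ _
    have hev (w : ℂ) (hw : w ∈ s) : p.eval w = if w = z then 1 else 0 := by
      split_ifs with hwz
      · subst hwz
        exact Lagrange.eval_basis_self (v := id) Function.injective_id.injOn hz
      · exact Lagrange.eval_basis_of_ne (v := id) (Ne.symm hwz) hw
    have := hp p
    rw [Finset.sum_congr rfl fun i _ => hev (d i) (by simp [s]),
      Finset.sum_congr rfl fun i _ => hev (e i) (by simp [s])] at this
    simp only [Finset.sum_boole] at this
    rw [Fintype.card_subtype, Fintype.card_subtype]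
    exact_mod_cast this
  let σ : ι ≃ ι := (Equiv.sigmaFiberEquiv e).symm.trans
    ((Equiv.sigmaCongrRight fun z => (Fintype.equivOfCardEq (hcard z)).symm).trans
      (Equiv.sigmaFiberEquiv d))
  refine ⟨σ, funext fun i => ?_⟩
  exact ((Fintype.equivOfCardEq (hcard (e i))).symm ⟨i, rfl⟩).2

theorem exists_unitary_conj_of_normal_of_trace_pow_eq {n : ℕ}
    {M N : Matrix (Fin n) (Fin n) ℂ} (hM : M * Mᴴ = Mᴴ * M) (hN : N * Nᴴ = Nᴴ * N)
    (h : ∀ k : ℕ, (M ^ k).trace = (N ^ k).trace) :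
    ∃ U : Matrix (Fin n) (Fin n) ℂ, U * Uᴴ = 1 ∧ N = U * M * Uᴴ := by
  obtain ⟨V, d, hV, rfl⟩ := exists_unitary_diagonalization_of_commute_conjTranspose hM
  obtain ⟨W, e, hW, rfl⟩ := exists_unitary_diagonalization_of_commute_conjTranspose hN
  have hV' : Vᴴ * V = 1 := mul_eq_one_comm.mp hV
  have htr (X : Matrix (Fin n) (Fin n) ℂ) (c : Fin n → ℂ) (hX' : Xᴴ * X = 1) (k : ℕ) :
      ((X * diagonal c * Xᴴ) ^ k).trace = ∑ i, c i ^ k := by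
    have hpow : (X * diagonal c * Xᴴ) ^ k = X * diagonal c ^ k * Xᴴ := by
      induction k with
      | zero => simp [mul_eq_one_comm.mp hX']
      | succ k ih =>
        rw [pow_succ, ih, pow_succ]
        calc _ = X * diagonal c ^ k * (Xᴴ * X) * diagonal c * Xᴴ := by noncomm_ring
          _ = _ := by rw [hX']; noncomm_ring
    rw [hpow, trace_mul_comm, ← Matrix.mul_assoc, hX', Matrix.one_mul, diagonal_pow, trace_diagonal]
    simp
  obtain ⟨σ, rfl⟩ := exists_perm_comp_eq_of_sum_pow_eq (d := d) (e := e) fun k => by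
    rw [← htr V d hV' k, h k, htr W e (mul_eq_one_comm.mp hW) k]
  let P := V.submatrix id σ
  have hP : P * Pᴴ = 1 := by
    simp only [P, conjTranspose_submatrix, submatrix_mul_equiv, hV, submatrix_id_id]
  have hP' : Pᴴ * P = 1 := mul_eq_one_comm.mp hP
  have hM' : V * diagonal d * Vᴴ = P * diagonal (d ∘ σ) * Pᴴ := by
    have : diagonal (d ∘ σ) = (diagonal d).submatrix σ σ := by simp
    simp only [P, this, conjTranspose_submatrix, submatrix_mul_equiv, submatrix_id_id]
  refine ⟨W * Pᴴ, ?_, ?_⟩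
  · rw [conjTranspose_mul, conjTranspose_conjTranspose]
    calc _ = W * (Pᴴ * P) * Wᴴ := by noncomm_ring
      _ = 1 := by rw [hP', Matrix.mul_one, hW]
  · rw [hM', conjTranspose_mul, conjTranspose_conjTranspose]
    calc _ = W * 1 * diagonal (d ∘ σ) * 1 * Wᴴ := by simp
      _ = _ := by rw [← hP']; noncomm_ring

theorem frobenius_norm_sq_eq_re_trace {m n : Type*} [Fintype m] [Fintype n] (M : Matrix m n ℂ) :
    ‖M‖ ^ 2 = (Mᴴ * M).trace.re := by
  rw [frobenius_norm_def, ← Real.sqrt_eq_rpow, Real.sq_sqrt (by positivity), Finset.sum_comm]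
  simp [trace, Matrix.mul_apply, ← Complex.normSq_eq_norm_sq, Complex.normSq_apply]

theorem HasDerivWithinAt.matrix_mul {n : ℕ} {A B : ℝ → Matrix (Fin n) (Fin n) ℂ}
    {A' B' : Matrix (Fin n) (Fin n) ℂ} {s : Set ℝ} {t : ℝ}
    (hA : HasDerivWithinAt A A' s t) (hB : HasDerivWithinAt B B' s t) :
    HasDerivWithinAt (fun t => A t * B t) (A' * B t + A t * B') s t := by
  let : NormedRing (Matrix (Fin n) (Fin n) ℂ) := frobeniusNormedRing
  let : NormedAlgebra ℝ (Matrix (Fin n) (Fin n) ℂ) := frobeniusNormedAlgebra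
  exact hA.mul hB

theorem HasDerivWithinAt.matrix_trace {n : ℕ} {A : ℝ → Matrix (Fin n) (Fin n) ℂ}
    {A' : Matrix (Fin n) (Fin n) ℂ} {s : Set ℝ} {t : ℝ} (hA : HasDerivWithinAt A A' s t) :
    HasDerivWithinAt (fun t => (A t).trace) A'.trace s t :=
  (traceLinearMap (Fin n) ℝ ℂ).toContinuousLinearMap.hasFDerivAt.comp_hasDerivWithinAt t hA

/-- A Lax equation `A' = [A, H]` propagates to all powers of `A`. -/
theorem HasDerivWithinAt.pow_of_lax {n : ℕ} {A : ℝ → Matrix (Fin n) (Fin n) ℂ}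
    {H : Matrix (Fin n) (Fin n) ℂ} {s : Set ℝ} {t : ℝ}
    (hA : HasDerivWithinAt A (A t * H - H * A t) s t) (k : ℕ) :
    HasDerivWithinAt (fun t => A t ^ k) (A t ^ k * H - H * A t ^ k) s t := by
  induction k with
  | zero =>
    simp only [pow_zero, Matrix.one_mul, Matrix.mul_one, sub_self]
    exact hasDerivWithinAt_const t s 1
  | succ k ih =>
    simp only [pow_succ]
    convert ih.matrix_mul hA using 1
    noncomm_ring

theorem trace_pow_eq_of_flow {n : ℕ} {A : ℝ → Matrix (Fin n) (Fin n) ℂ}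
    (hA : ∀ t ∈ Ici (0 : ℝ),
      HasDerivWithinAt A (A t * (A t * (A t)ᴴ - (A t)ᴴ * A t)) (Ici 0) t)
    (k : ℕ) {t : ℝ} (ht : 0 ≤ t) : (A t ^ k).trace = (A 0 ^ k).trace := by
  have hderiv (t : ℝ) (ht : t ∈ Ici (0 : ℝ)) :
      HasDerivWithinAt (fun t => (A t ^ k).trace) 0 (Ici 0) t := by
    have hlax : HasDerivWithinAt A (A t * (A t * (A t)ᴴ) - A t * (A t)ᴴ * A t) (Ici 0) t := by
      convert hA t ht using 1
      noncomm_ring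
    convert (hlax.pow_of_lax k).matrix_trace using 1
    rw [trace_sub, trace_mul_comm, sub_self]
  have := (convex_Ici (0 : ℝ)).norm_image_sub_le_of_norm_hasDerivWithin_le (C := 0) hderiv
    (by simp) (mem_Ici.mpr le_rfl) (mem_Ici.mpr ht)
  simpa [sub_eq_zero] using this

theorem hasDerivWithinAt_norm_sq_of_flow {n : ℕ} {A : ℝ → Matrix (Fin n) (Fin n) ℂ} {s : Set ℝ}
    {t : ℝ} (hA : HasDerivWithinAt A (A t * (A t * (A t)ᴴ - (A t)ᴴ * A t)) s t) :
    HasDerivWithinAt (fun t => ‖A t‖ ^ 2) (-‖A t * (A t)ᴴ - (A t)ᴴ * A t‖ ^ 2) s t := by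
  have hstar : HasDerivWithinAt (fun t => (A t)ᴴ) _ s t := hA.star
  have htr := Complex.reCLM.hasFDerivAt.comp_hasDerivWithinAt t (hstar.matrix_mul hA).matrix_trace
  simp only [frobenius_norm_sq_eq_re_trace]
  refine HasDerivWithinAt.congr_deriv (f := fun t => ((A t)ᴴ * A t).trace.re) htr ?_
  simp only [Complex.reCLM_apply, ← Complex.neg_re]
  congr 1
  simp only [star_eq_conjTranspose, conjTranspose_mul, conjTranspose_sub,
    conjTranspose_conjTranspose, mul_sub, sub_mul, trace_add, trace_sub]
  set B := (A t)ᴴ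
  set M := A t
  have e₁ : (M * B * (B * M)).trace = (B * M * (M * B)).trace := trace_mul_comm _ _
  have e₂ : (M * B * B * M).trace = (B * M * M * B).trace := by
    simpa only [Matrix.mul_assoc] using e₁
  have e₃ : (M * B * M * B).trace = (B * M * B * M).trace := by
    simpa only [Matrix.mul_assoc] using trace_mul_comm M (B * M * B)
  simp only [← Matrix.mul_assoc, e₂, e₃]
  ring

/-- An antitone function on `[0, ∞)` that is nonnegative loses asymptotically nothing on
time intervals of fixed length. -/
theorem AntitoneOn.tendsto_sub_of_nonneg {E : ℝ → ℝ} (hE : AntitoneOn E (Ici 0))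
    (hE₀ : ∀ t, 0 ≤ E t) (δ : ℝ) : Tendsto (fun t => E t - E (t + δ)) atTop (nhds 0) := by
  have hanti : Antitone fun t => E (max t 0) := fun a b hab =>
    hE (mem_Ici.mpr (le_max_right _ _)) (mem_Ici.mpr (le_max_right _ _)) (max_le_max_right 0 hab)
  have hlim := tendsto_atTop_ciInf hanti ⟨0, by rintro _ ⟨t, rfl⟩; exact hE₀ _⟩
  have hlim' : Tendsto E atTop (nhds (⨅ t, E (max t 0))) :=
    hlim.congr' <| (eventually_ge_atTop 0).mono fun t ht => by simp [max_eq_left ht]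
  simpa using hlim'.sub (hlim'.comp (tendsto_atTop_add_const_right atTop δ tendsto_id))

theorem normal_of_tendsto_flow {n : ℕ} {A : ℝ → Matrix (Fin n) (Fin n) ℂ}
    (hA : ∀ t ∈ Ici (0 : ℝ),
      HasDerivWithinAt A (A t * (A t * (A t)ᴴ - (A t)ᴴ * A t)) (Ici 0) t)
    {tk : ℕ → ℝ} (htk : Tendsto tk atTop atTop) {L : Matrix (Fin n) (Fin n) ℂ}
    (hL : Tendsto (fun k => A (tk k)) atTop (nhds L)) : L * Lᴴ = Lᴴ * L := by
  have hE (t : ℝ) (ht : t ∈ Ici (0 : ℝ)) := hasDerivWithinAt_norm_sq_of_flow (hA t ht)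
  have hcont : ContinuousOn (fun t => ‖A t‖ ^ 2) (Ici 0) := fun t ht =>
    (hE t ht).continuousWithinAt
  have hE' (t : ℝ) (ht : t ∈ interior (Ici (0 : ℝ))) : HasDerivAt (fun t => ‖A t‖ ^ 2)
      (-‖A t * (A t)ᴴ - (A t)ᴴ * A t‖ ^ 2) t :=
    (hE t (interior_subset ht)).hasDerivAt (mem_interior_iff_mem_nhds.mp ht)
  have hanti : AntitoneOn (fun t => ‖A t‖ ^ 2) (Ici 0) :=
    antitoneOn_of_hasDerivWithinAt_nonpos (convex_Ici 0) hcont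
      (fun t ht => (hE' t ht).hasDerivWithinAt) fun t _ => by simp
  have hbound (t : ℝ) (ht : t ∈ Ici (0 : ℝ)) : ‖A t‖ ≤ ‖A 0‖ :=
    pow_le_pow_iff_left₀ (norm_nonneg _) (norm_nonneg _) two_ne_zero |>.mp
      (hanti self_mem_Ici ht ht)
  let R := ‖A 0‖
  have hlip {s t : ℝ} (hs : s ∈ Ici (0 : ℝ)) (ht : t ∈ Ici (0 : ℝ)) :
      ‖A t - A s‖ ≤ (R * (R * R + R * R)) * ‖t - s‖ := by
    refine (convex_Ici (0 : ℝ)).norm_image_sub_le_of_norm_hasDerivWithin_le hA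
      (fun x hx => ?_) hs ht
    have hR := hbound x hx
    calc _ ≤ ‖A x‖ * (‖A x‖ * ‖(A x)ᴴ‖ + ‖(A x)ᴴ‖ * ‖A x‖) :=
          (frobenius_norm_mul _ _).trans <| by
            gcongr
            exact (norm_sub_le _ _).trans
              (add_le_add (frobenius_norm_mul _ _) (frobenius_norm_mul _ _))
      _ ≤ _ := by rw [frobenius_norm_conjTranspose]; gcongr
  by_contra hne
  let F : Matrix (Fin n) (Fin n) ℂ → ℝ := fun M => ‖M * Mᴴ - Mᴴ * M‖ ^ 2
  have hF : Continuous F := by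
    have : Continuous fun M : Matrix (Fin n) (Fin n) ℂ => Mᴴ := continuous_star
    fun_prop
  have hFL : 0 < F L := by
    have := norm_pos_iff.mpr (sub_ne_zero.mpr hne)
    positivity
  obtain ⟨ε, hε, hball⟩ := Metric.eventually_nhds_iff.mp
    (hF.continuousAt.eventually_const_lt (half_lt_self hFL))
  let K := R * (R * R + R * R)
  have hK : 0 ≤ K := by positivity
  let δ := ε / (2 * (K + 1))
  have hδ : 0 < δ := by positivity
  have hKδ : K * δ ≤ ε / 2 := by
    have : (K + 1) * δ = ε / 2 := by simp only [δ]; field_simp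
    nlinarith
  have hdrop := ((hanti.tendsto_sub_of_nonneg (fun t => by positivity) δ).comp
    htk).eventually_lt_const (show 0 < F L / 2 * δ by positivity)
  obtain ⟨k, hk, hk₀, hkL⟩ := (hdrop.and ((htk.eventually_ge_atTop 0).and
    (Metric.tendsto_nhds.mp hL (ε / 2) (half_pos hε)))).exists
  obtain ⟨ξ, hξ, hξE⟩ := exists_hasDerivAt_eq_slope (fun t => ‖A t‖ ^ 2) _
    (lt_add_of_pos_right (tk k) hδ)
    (hcont.mono fun x hx => hk₀.trans hx.1)
    (fun x hx => hE' x (by rw [interior_Ici]; exact hk₀.trans_lt hx.1))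
  have hξF : F L / 2 < F (A ξ) := by
    refine hball ?_
    have h₁ := hlip (mem_Ici.mpr hk₀) (mem_Ici.mpr (hk₀.trans hξ.1.le))
    have h₂ : ‖ξ - tk k‖ ≤ δ := by
      rw [Real.norm_of_nonneg] <;> linarith [hξ.1, hξ.2]
    calc dist (A ξ) L ≤ dist (A ξ) (A (tk k)) + dist (A (tk k)) L := dist_triangle _ _ _
      _ < ε / 2 + ε / 2 := add_lt_add_of_le_of_lt
          ((dist_eq_norm _ _).trans_le
            (h₁.trans ((mul_le_mul_of_nonneg_left h₂ hK).trans hKδ))) hkL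
      _ = ε := add_halves ε
  rw [add_sub_cancel_left, eq_div_iff hδ.ne'] at hξE
  have := mul_lt_mul_of_pos_right hξF hδ
  simp only [Function.comp_apply, F] at hk this
  linarith

theorem trace_pow_eq_of_tendsto_flow {n : ℕ} {A : ℝ → Matrix (Fin n) (Fin n) ℂ}
    (hA : ∀ t ∈ Ici (0 : ℝ),
      HasDerivWithinAt A (A t * (A t * (A t)ᴴ - (A t)ᴴ * A t)) (Ici 0) t)
    {tk : ℕ → ℝ} (htk : Tendsto tk atTop atTop) {L : Matrix (Fin n) (Fin n) ℂ}
    (hL : Tendsto (fun k => A (tk k)) atTop (nhds L)) (k : ℕ) :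
    (L ^ k).trace = (A 0 ^ k).trace := by
  have hcont : Continuous fun M : Matrix (Fin n) (Fin n) ℂ => (M ^ k).trace :=
    (continuous_pow k).matrix_trace
  refine tendsto_nhds_unique ((hcont.tendsto L).comp hL) (tendsto_const_nhds.congr' ?_)
  exact (htk.eventually_ge_atTop 0).mono fun j hj => (trace_pow_eq_of_flow hA k hj).symm

theorem stmt9 {n : ℕ} {A : ℝ → Matrix (Fin n) (Fin n) ℂ}
    (hA : ∀ t ∈ Ici (0 : ℝ),
      HasDerivWithinAt A (A t * (A t * (A t)ᴴ - (A t)ᴴ * A t)) (Ici 0) t)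
    {tk sk : ℕ → ℝ} (htk : Tendsto tk atTop atTop) (hsk : Tendsto sk atTop atTop)
    {Ainf Ainf' : Matrix (Fin n) (Fin n) ℂ}
    (h1 : Tendsto (fun k => A (tk k)) atTop (nhds Ainf))
    (h2 : Tendsto (fun k => A (sk k)) atTop (nhds Ainf')) :
    Ainf * Ainfᴴ = Ainfᴴ * Ainf ∧
      ∃ U : Matrix (Fin n) (Fin n) ℂ, U * Uᴴ = 1 ∧ Ainf' = U * Ainf * Uᴴ := by
  have hN := normal_of_tendsto_flow hA htk h1
  refine ⟨hN, exists_unitary_conj_of_normal_of_trace_pow_eq hN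
    (normal_of_tendsto_flow hA hsk h2) fun k => ?_⟩
  rw [trace_pow_eq_of_tendsto_flow hA htk h1, trace_pow_eq_of_tendsto_flow hA hsk h2]
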